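/- For all nonzero G ∈ A and nonzero monic H ∈ A, Σ over monic D with D ∥ H of |η*(G,D)| equals 2^{ω(H/(G,H)_*)} · |(G,H)_*|. In particular Σ_{D ∥ H} |η*(G,D)| ≤ 2^{ω(H)} · |G|. -/

import Mathlib

/-!
Write `H = ∏ P ^ e` as the product of its prime-power components. The condition `(D, H)_* = 1`
says that no component `P ^ e` divides `D`, so its indicator is `∏ (1 - [P ^ e ∣ D])`. Expanding
over sets `T` of primes, with `L` and `K` the products of the components over `T` and over its
complement, `η*(G,H)` becomes a signed sum of the sums of `E(G,H)(D)` over the residues `D`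
divisible by `L`. Substituting `D = L D'` turns `E(G,H)(D)` into `E(G,K)(D')`
(`echar_mul_left`), and orthogonality (`sum_residues_echar`) evaluates the inner sum as
`[K ∣ G] |K|`. Refolding the expansion gives (`etaStar_eq_prod`)
`η*(G,H) = ∏ ([P ^ e ∣ G] |P ^ e| - 1)`.

The monic unitary divisors of `H` are the products of sub-families of its components
(`unitary_iff`), so the sum of `|η*(G,D)|` factors as `∏ (1 + |[P ^ e ∣ G] |P ^ e| - 1|)`. The
factor at `P` is `|P ^ e|` if `P ^ e ∣ G` and `2` otherwise. The components of the first kind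
multiply to `(G,H)_*`, and those of the second kind to `H / (G,H)_*`. The inequality follows from
`(G,H)_* ∣ G`.
-/

open Polynomial UniqueFactorizationMonoid

variable (p : ℕ) [Fact p.Prime] (F : Type) [Field F] [Fintype F] [DecidableEq F]
  [Algebra (ZMod p) F]

/-- The absolute value `|G| = q ^ deg G` of a polynomial over `𝔽_q`. -/
def anorm (G : Polynomial F) : ℕ := Fintype.card F ^ G.natDegree

/-- `t_H(A')`: the coefficient of `T^(m-1)` in the remainder of `A'` upon division by `H`,
where `m = deg H`. -/
noncomputable def tmap (H A' : Polynomial F) : F := (A' % H).coeff (H.natDegree - 1)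

/-- The additive character `E(G,H)(D) = exp(2πi · tr(t_H(G·D)) / p)`. -/
noncomputable def echar (G H D : Polynomial F) : ℂ :=
  Complex.exp (2 * Real.pi * Complex.I *
    ((Algebra.trace (ZMod p) F (tmap F H (G * D))).val : ℂ) / (p : ℂ))

open scoped Classical in
/-- `ω(G)`: the number of distinct monic irreducible divisors of `G`. -/
noncomputable def omega (G : Polynomial F) : ℕ := (normalizedFactors G).toFinset.card

open scoped Classical in
/-- The Möbius function on `𝔽_q[T]`. -/
noncomputable def mu (G : Polynomial F) : ℤ :=
  if Squarefree G then (-1) ^ omega F G else 0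

/-- The polynomial Ramanujan sum `η(G,H)`: the sum of `E(G,H)(D)` over a complete residue
system `D` modulo `H` with `(D,H) = 1`. -/
noncomputable def eta (G H : Polynomial F) : ℂ :=
  ∑' D : {D : Polynomial F // D.degree < H.degree ∧ IsCoprime D H}, echar p F G H D.1

open scoped Classical in
/-- The unitary gcd `(G,H)_*`: the monic polynomial of highest degree dividing `G` and
unitarily dividing `H`. -/
noncomputable def ugcd (G H : Polynomial F) : Polynomial F :=
  ∏ P ∈ (normalizedFactors H).toFinset,
    if P ^ (normalizedFactors H).count P ∣ G then P ^ (normalizedFactors H).count P else 1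

/-- `μ*(G) = (-1)^(ω(G))`. -/
noncomputable def muStar (G : Polynomial F) : ℤ := (-1) ^ omega F G

/-- The unitary polynomial Ramanujan sum `η*(G,H)`: the sum of `E(G,H)(D)` over a complete
residue system `D` modulo `H` with `(D,H)_* = 1`. -/
noncomputable def etaStar (G H : Polynomial F) : ℂ :=
  ∑' D : {D : Polynomial F // D.degree < H.degree ∧ ugcd F D H = 1}, echar p F G H D.1

/-! ### Additive characters and orthogonality -/

set_option linter.unusedSectionVars false

theorem tmap_add (H A B : F[X]) : tmap F H (A + B) = tmap F H A + tmap F H B := by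
  simp [tmap, Polynomial.add_mod]

theorem echar_eq (G H D : F[X]) :
    echar p F G H D = ZMod.stdAddChar (Algebra.trace (ZMod p) F (tmap F H (G * D))) := by
  rw [ZMod.stdAddChar_apply, ZMod.toCircle_apply]; rfl

theorem echar_add (G H D E : F[X]) :
    echar p F G H (D + E) = echar p F G H D * echar p F G H E := by
  simp only [echar_eq, mul_add, tmap_add, map_add, AddChar.map_add_eq_mul]

theorem mul_mod_mul_monic {K L : F[X]} (hK : K.Monic) (hL : L.Monic) (A : F[X]) :
    (L * A) % (L * K) = L * (A % K) := by
  rw [← modByMonic_eq_mod _ (hL.mul hK), ← modByMonic_eq_mod _ hK]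
  refine (div_modByMonic_unique (A /ₘ K) _ (hL.mul hK) ⟨?_, ?_⟩).2
  · conv_rhs => rw [← modByMonic_add_div A K]
    ring
  · rw [degree_mul, degree_mul]
    have := degree_modByMonic_lt A hK
    rw [degree_eq_natDegree hL.ne_zero]
    by_cases h : A %ₘ K = 0
    · rw [h, degree_eq_natDegree hK.ne_zero]
      simp [WithBot.bot_lt_iff_ne_bot, ← Nat.cast_add]
    · rw [degree_eq_natDegree h, degree_eq_natDegree hK.ne_zero] at *
      norm_cast at *
      omega

/-- Scaling modulus and argument by a common monic factor leaves the character unchanged. -/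
theorem echar_mul_left {K L : F[X]} (hK : K.Monic) (hL : L.Monic) (G D : F[X]) :
    echar p F G (L * K) (L * D) = echar p F G K D := by
  have : tmap F (L * K) (G * (L * D)) = tmap F K (G * D) := by
    unfold tmap
    rw [mul_left_comm, mul_mod_mul_monic F hK hL, hL.natDegree_mul hK]
    have hlt := degree_modByMonic_lt (G * D) hK
    rw [modByMonic_eq_mod _ hK] at hlt
    -- for `deg K = 0` the index `deg K - 1` truncates, but the remainder vanishes
    by_cases h0 : K.natDegree = 0
    · have : (G * D) % K = 0 := by
        rw [hK.natDegree_eq_zero.1 h0]; simp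
      simp [this]
    · rw [show L.natDegree + K.natDegree - 1 = L.natDegree + (K.natDegree - 1) by omega]
      rw [coeff_mul_add_eq_of_natDegree_le le_rfl]
      · simp [hL.coeff_natDegree]
      · rw [degree_eq_natDegree hK.ne_zero] at hlt
        by_cases h : (G * D) % K = 0
        · simp [h]
        · rw [degree_eq_natDegree h] at hlt
          norm_cast at hlt
          omega
  rw [echar_eq, echar_eq, this]

theorem finite_residues (K : F[X]) : {D : F[X] | D.degree < K.degree}.Finite := by
  by_cases hK : K = 0
  · simp [hK]
  have : {D : F[X] | D.degree < K.degree} = (degreeLT F K.natDegree : Set F[X]) := by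
    ext D
    simp [mem_degreeLT, degree_eq_natDegree hK]
  rw [this]
  have := Finite.of_equiv _ (degreeLTEquiv F K.natDegree).symm.toEquiv
  exact Set.toFinite _

/-- The standard complete residue system modulo `K`: the polynomials of degree below `deg K`. -/
noncomputable def residues (K : F[X]) : Finset F[X] := (finite_residues F K).toFinset

theorem mem_residues {K D : F[X]} : D ∈ residues F K ↔ D.degree < K.degree := by
  simp [residues]

theorem card_residues {K : F[X]} (hK : K ≠ 0) : (residues F K).card = anorm F K := by
  have : {D : F[X] | D.degree < K.degree} = (degreeLT F K.natDegree : Set F[X]) := by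
    ext D
    simp [mem_degreeLT, degree_eq_natDegree hK]
  rw [residues, ← Set.ncard_eq_toFinset_card _ (finite_residues F K), this, ← Nat.card_coe_set_eq, SetLike.coe_sort_coe,
    Nat.card_congr (degreeLTEquiv F K.natDegree).toEquiv]
  simp [anorm]

/-- If `K ∤ G`, the character `E(G,K)` is nontrivial on the residues modulo `K`. -/
theorem exists_echar_ne_one {G K : F[X]} (hK : K.Monic) (h : ¬ K ∣ G) :
    ∃ D ∈ residues F K, echar p F G K D ≠ 1 := by
  have hr : G % K ≠ 0 := fun h0 => h (EuclideanDomain.mod_eq_zero.1 h0)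
  have hlt : (G % K).natDegree < K.natDegree :=
    natDegree_lt_natDegree hr (degree_mod_lt G hK.ne_zero)
  have : FiniteDimensional (ZMod p) F := Module.Finite.of_finite
  obtain ⟨a, ha⟩ := Algebra.trace_surjective (ZMod p) F 1
  have hlc : (G % K).leadingCoeff ≠ 0 := leadingCoeff_ne_zero.2 hr
  set j := K.natDegree - 1 - (G % K).natDegree with hj
  -- the monomial is chosen so that `(G % K) * D` has degree `deg K - 1` and leading coefficient `a`
  refine ⟨monomial j (a / (G % K).leadingCoeff), ?_, ?_⟩
  · rw [mem_residues, degree_eq_natDegree hK.ne_zero]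
    refine (degree_monomial_le _ _).trans_lt ?_
    norm_cast
    omega
  · have : tmap F K (G * monomial j (a / (G % K).leadingCoeff)) = a := by
      unfold tmap
      have e : (G * monomial j (a / (G % K).leadingCoeff)) % K =
          (G % K) * monomial j (a / (G % K).leadingCoeff) := by
        rw [← (mod_eq_self_iff (p := (G % K) * monomial j (a / (G % K).leadingCoeff))
          hK.ne_zero).2]
        · refine mod_eq_of_dvd_sub ?_
          rw [← sub_mul]
          refine Dvd.dvd.mul_right ?_ _
          exact ⟨G / K, by rw [sub_eq_iff_eq_add]; exact (EuclideanDomain.div_add_mod G K).symm⟩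
        · refine degree_lt_degree ?_ 
          refine natDegree_mul_le.trans_lt ?_
          have := natDegree_monomial_le (m := j) (a / (G % K).leadingCoeff)
          omega
      rw [e, show K.natDegree - 1 = (G % K).natDegree + j by omega, coeff_mul_monomial]
      rw [coeff_natDegree]
      field_simp
    rw [echar_eq, this, ha]
    intro h1
    have := ZMod.injective_stdAddChar (N := p) (h1.trans (AddChar.map_zero_eq_one _).symm)
    exact one_ne_zero this

open scoped Classical in
/-- Orthogonality: if some residue `E` has `E(G,K)(E) ≠ 1`, translation by `E` kills the sum. -/
theorem sum_residues_echar {K : F[X]} (hK : K.Monic) (G : F[X]) :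
    ∑ D ∈ residues F K, echar p F G K D = if K ∣ G then (anorm F K : ℂ) else 0 := by
  split_ifs with h
  · rw [← card_residues F hK.ne_zero, Finset.cast_card]
    refine Finset.sum_congr rfl fun D _ => ?_
    have : tmap F K (G * D) = 0 := by
      rw [tmap, EuclideanDomain.mod_eq_zero.2 (h.mul_right D), coeff_zero]
    rw [echar_eq, this, map_zero, AddChar.map_zero_eq_one]
  · obtain ⟨E, hE, hne⟩ := exists_echar_ne_one p F hK h
    have hs : ∑ D ∈ residues F K, echar p F G K D =
        ∑ D ∈ residues F K, echar p F G K D * echar p F G K E := by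
      symm
      refine Finset.sum_nbij' (· + E) (· - E) ?_ ?_ ?_ ?_ ?_
      · intro D hD
        rw [mem_residues] at *
        exact (degree_add_le _ _).trans_lt (max_lt hD hE)
      · intro D hD
        rw [mem_residues] at *
        exact (degree_sub_le _ _).trans_lt (max_lt hD hE)
      · simp
      · simp
      · intro D _
        rw [echar_add]
    rw [← Finset.sum_mul] at hs
    by_contra h0
    exact hne (mul_left_cancel₀ h0 (by rw [mul_one, ← hs]))

open scoped Classical in
/-- Orthogonality restricted to the residues modulo `L * K` that are divisible by `L`. -/
theorem sum_residues_multiples {K L : F[X]} (hK : K.Monic) (hL : L.Monic) (G : F[X]) :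
    ∑ D ∈ residues F (L * K) with L ∣ D, echar p F G (L * K) D =
      if K ∣ G then (anorm F K : ℂ) else 0 := by
  rw [← sum_residues_echar p F hK G]
  symm
  have hdeg : ∀ D : F[X], (L * D).degree < (L * K).degree ↔ D.degree < K.degree := by
    intro D
    rw [degree_mul, degree_mul, degree_eq_natDegree hL.ne_zero]
    exact WithBot.add_lt_add_iff_left (by simp)
  refine Finset.sum_nbij (L * ·) ?_ ?_ ?_ ?_
  · intro D hD
    rw [mem_residues] at hD
    simpa [mem_residues, -degree_mul, hdeg] using hD
  · intro D _ E _ h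
    exact mul_left_cancel₀ hL.ne_zero h
  · intro D hD
    obtain ⟨hD, E, rfl⟩ := by simpa [mem_residues, -degree_mul] using hD
    exact ⟨E, by simpa [mem_residues, -degree_mul, hdeg] using hD, rfl⟩
  · intro D _
    rw [echar_mul_left p F hK hL]

/-! ### Prime-power components and unitary divisors -/

open scoped Classical in
/-- The monic irreducible divisors of `H`. -/
noncomputable def primeSet (H : F[X]) : Finset F[X] := (normalizedFactors H).toFinset

open scoped Classical in
/-- The exact power of the irreducible `P` occurring in `H`; it is `1` if `P` is not a monic
irreducible divisor of `H`. -/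
noncomputable def primePart (H P : F[X]) : F[X] := P ^ (normalizedFactors H).count P

theorem mem_primeSet {H : F[X]} (hH : H ≠ 0) {P : F[X]} :
    P ∈ primeSet F H ↔ Irreducible P ∧ P.Monic ∧ P ∣ H := by
  rw [primeSet, Multiset.mem_toFinset, Polynomial.mem_normalizedFactors_iff hH]

theorem prod_primePart {H : F[X]} (hH : H.Monic) :
    ∏ P ∈ primeSet F H, primePart F H P = H := by
  simp only [primeSet, primePart]
  rw [← Finset.prod_multiset_count, prod_normalizedFactors_eq hH.ne_zero, hH.normalize_eq_self]

theorem dvd_primePart {H P : F[X]} (hP : P ∈ primeSet F H) : P ∣ primePart F H P := by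
  refine dvd_pow_self _ ?_
  rw [primeSet, Multiset.mem_toFinset] at hP
  exact (Multiset.count_pos.2 hP).ne'

theorem monic_primePart {H P : F[X]} (hH : H ≠ 0) (hP : P ∈ primeSet F H) :
    (primePart F H P).Monic := ((mem_primeSet F hH).1 hP).2.1.pow _

theorem monic_prod {H : F[X]} (hH : H ≠ 0) {T : Finset F[X]} (hT : T ⊆ primeSet F H) :
    (∏ P ∈ T, primePart F H P).Monic :=
  monic_prod_of_monic _ _ fun _ hP => monic_primePart F hH (hT hP)

theorem coprime_primePart {H P Q : F[X]} (hH : H ≠ 0) (hP : P ∈ primeSet F H)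
    (hQ : Q ∈ primeSet F H) (h : P ≠ Q) : IsCoprime (primePart F H P) (primePart F H Q) := by
  obtain ⟨iP, mP, -⟩ := (mem_primeSet F hH).1 hP
  obtain ⟨iQ, mQ, -⟩ := (mem_primeSet F hH).1 hQ
  refine IsCoprime.pow ((iP.coprime_iff_not_dvd).2 fun hd => h ?_)
  exact eq_of_monic_of_associated mP mQ (iP.associated_of_dvd iQ hd)

theorem prod_primePart_dvd_iff {H : F[X]} (hH : H ≠ 0) {T : Finset F[X]}
    (hT : T ⊆ primeSet F H) (D : F[X]) :
    ∏ P ∈ T, primePart F H P ∣ D ↔ ∀ P ∈ T, primePart F H P ∣ D := by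
  refine ⟨fun h P hP => (Finset.dvd_prod_of_mem _ hP).trans h, fun h => ?_⟩
  exact Finset.prod_dvd_of_coprime
    (fun P hP Q hQ hne => coprime_primePart F hH (hT hP) (hT hQ) hne) h

theorem primeSet_prod {H : F[X]} (hH : H ≠ 0) {T : Finset F[X]} (hT : T ⊆ primeSet F H) :
    primeSet F (∏ P ∈ T, primePart F H P) = T := by
  ext Q
  rw [mem_primeSet F (monic_prod F hH hT).ne_zero]
  constructor
  · rintro ⟨iQ, mQ, hd⟩
    obtain ⟨P, hP, hQP⟩ := (Prime.dvd_finsetProd_iff iQ.prime _).1 hd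
    obtain ⟨iP, mP, -⟩ := (mem_primeSet F hH).1 (hT hP)
    have := iQ.prime.dvd_of_dvd_pow hQP
    rwa [eq_of_monic_of_associated mQ mP (iQ.associated_of_dvd iP this)]
  · intro hQ
    obtain ⟨iQ, mQ, -⟩ := (mem_primeSet F hH).1 (hT hQ)
    exact ⟨iQ, mQ, (dvd_primePart F (hT hQ)).trans (Finset.dvd_prod_of_mem _ hQ)⟩

/-- A unitary divisor has the same prime-power components as the ambient polynomial. -/
theorem primePart_eq_of_coprime {D E P : F[X]} (hD : D ≠ 0) (hE : E ≠ 0) (h : IsCoprime D E)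
    (hP : P ∈ primeSet F D) : primePart F (D * E) P = primePart F D P := by
  obtain ⟨iP, mP, hPD⟩ := (mem_primeSet F hD).1 hP
  have h0 : P ∉ normalizedFactors E := fun hPE => by
    exact iP.not_isUnit (h.isUnit_of_dvd' hPD (dvd_of_mem_normalizedFactors hPE))
  simp only [primePart]
  rw [normalizedFactors_mul hD hE, Multiset.count_add, Multiset.count_eq_zero_of_notMem h0,
    add_zero]

theorem prod_mul_prod_sdiff {H : F[X]} (hH : H.Monic) {T : Finset F[X]}
    (hT : T ⊆ primeSet F H) [DecidableEq F[X]] :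
    (∏ P ∈ T, primePart F H P) * ∏ P ∈ primeSet F H \ T, primePart F H P = H := by
  rw [mul_comm, Finset.prod_sdiff hT, prod_primePart F hH]

theorem div_prod {H : F[X]} (hH : H.Monic) {T : Finset F[X]}
    (hT : T ⊆ primeSet F H) [DecidableEq F[X]] :
    H / (∏ P ∈ T, primePart F H P) = ∏ P ∈ primeSet F H \ T, primePart F H P := by
  have h := mul_div_cancel_left₀ (∏ P ∈ primeSet F H \ T, primePart F H P)
    (monic_prod F hH.ne_zero hT).ne_zero
  rwa [prod_mul_prod_sdiff F hH hT] at h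

theorem coprime_prod_sdiff {H : F[X]} (hH : H ≠ 0) {T : Finset F[X]}
    (hT : T ⊆ primeSet F H) [DecidableEq F[X]] :
    IsCoprime (∏ P ∈ T, primePart F H P) (∏ P ∈ primeSet F H \ T, primePart F H P) := by
  refine IsCoprime.prod_left fun P hP => IsCoprime.prod_right fun Q hQ => ?_
  rw [Finset.mem_sdiff] at hQ
  exact coprime_primePart F hH (hT hP) hQ.1 (fun h => hQ.2 (h ▸ hP))

theorem primePart_prod {H P : F[X]} (hH : H.Monic) {T : Finset F[X]}
    (hT : T ⊆ primeSet F H) (hP : P ∈ T) :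
    primePart F (∏ Q ∈ T, primePart F H Q) P = primePart F H P := by
  classical
  have h := primePart_eq_of_coprime F (P := P) (monic_prod F hH.ne_zero hT).ne_zero
    (monic_prod F hH.ne_zero Finset.sdiff_subset).ne_zero (coprime_prod_sdiff F hH.ne_zero hT)
    (by rwa [primeSet_prod F hH.ne_zero hT])
  rw [prod_mul_prod_sdiff F hH hT] at h
  exact h.symm

/-- The monic unitary divisors of `H` are the products of its prime-power components over
sets of monic irreducible divisors. -/
theorem unitary_iff {H : F[X]} (hH : H.Monic) (D : F[X]) :
    (∃ T ⊆ primeSet F H, ∏ P ∈ T, primePart F H P = D) ↔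
      D.Monic ∧ D ∣ H ∧ IsCoprime D (H / D) := by
  classical
  constructor
  · rintro ⟨T, hT, rfl⟩
    refine ⟨monic_prod F hH.ne_zero hT, ⟨_, (prod_mul_prod_sdiff F hH hT).symm⟩, ?_⟩
    rw [div_prod F hH hT]
    exact coprime_prod_sdiff F hH.ne_zero hT
  · rintro ⟨mD, ⟨E, rfl⟩, hc⟩
    rw [mul_div_cancel_left₀ _ mD.ne_zero] at hc
    have hE : E ≠ 0 := right_ne_zero_of_mul hH.ne_zero
    refine ⟨primeSet F D, fun P hP => ?_, ?_⟩
    · obtain ⟨iP, mP, hd⟩ := (mem_primeSet F mD.ne_zero).1 hP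
      exact (mem_primeSet F hH.ne_zero).2 ⟨iP, mP, hd.mul_right _⟩
    · rw [Finset.prod_congr rfl fun P hP => primePart_eq_of_coprime F mD.ne_zero hE hc hP,
        prod_primePart F mD]

open scoped Classical in
theorem ugcd_eq (G H : F[X]) :
    ugcd F G H = ∏ P ∈ primeSet F H with primePart F H P ∣ G, primePart F H P := by
  rw [Finset.prod_filter]; rfl

theorem ugcd_eq_one_iff {G H : F[X]} (hH : H ≠ 0) :
    ugcd F G H = 1 ↔ ∀ P ∈ primeSet F H, ¬ primePart F H P ∣ G := by
  classical
  rw [ugcd_eq]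
  constructor
  · intro h P hP hd
    have h1 : P ∣ 1 := h ▸ (dvd_primePart F hP).trans
      (Finset.dvd_prod_of_mem _ (Finset.mem_filter.2 ⟨hP, hd⟩))
    exact ((mem_primeSet F hH).1 hP).1.not_isUnit (isUnit_of_dvd_one h1)
  · intro h
    rw [Finset.filter_false_of_mem h, Finset.prod_empty]

theorem anorm_prod {T : Finset F[X]} {f : F[X] → F[X]} (h : ∀ P ∈ T, (f P).Monic) :
    anorm F (∏ P ∈ T, f P) = ∏ P ∈ T, anorm F (f P) := by
  simp only [anorm, natDegree_prod_of_monic _ _ h, Finset.prod_pow_eq_pow_sum]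

theorem one_le_anorm (G : F[X]) : 1 ≤ anorm F G := Nat.one_le_pow _ _ Fintype.card_pos

/-! ### Evaluation of the unitary Ramanujan sum -/

theorem tsum_subtype_eq {α β : Type*} [AddCommMonoid β] [TopologicalSpace β] {q : α → Prop}
    (s : Finset α) (h : ∀ x, x ∈ s ↔ q x) (f : α → β) :
    ∑' x : {x // q x}, f x = ∑ x ∈ s, f x := by
  rw [← Finset.tsum_subtype]
  exact ((Equiv.subtypeEquivRight h).tsum_eq (fun x : {x // q x} => f x)).symm

open scoped Classical in
/-- The product formula for `η*(G,H)`: expanding the indicator `∏ (1 - [P^e ∣ D])` of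
`(D,H)_* = 1` turns the sum into orthogonality relations to complementary unitary divisors. -/
theorem etaStar_eq_prod {H : F[X]} (hH : H.Monic) (G : F[X]) :
    etaStar p F G H = ∏ P ∈ primeSet F H,
      ((if primePart F H P ∣ G then (anorm F (primePart F H P) : ℂ) else 0) - 1) := by
  have h0 := hH.ne_zero
  have h1 : etaStar p F G H =
      ∑ D ∈ residues F H, (∏ P ∈ primeSet F H, (1 - if primePart F H P ∣ D then (1 : ℂ) else 0)) *
        echar p F G H D := by
    rw [etaStar, tsum_subtype_eq ((residues F H).filter fun D => ugcd F D H = 1)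
      (fun D => by rw [Finset.mem_filter, mem_residues]), Finset.sum_filter]
    refine Finset.sum_congr rfl fun D _ => ?_
    simp only [ugcd_eq_one_iff F h0]
    split_ifs with h
    · rw [Finset.prod_congr rfl fun P hP => by rw [if_neg (h P hP), sub_zero]]
      simp
    · push Not at h
      obtain ⟨P, hP, hd⟩ := h
      rw [Finset.prod_eq_zero hP (by simp [hd]), zero_mul]
  rw [h1, Finset.prod_sub]
  simp only [Finset.prod_sub, Finset.sum_mul]
  rw [Finset.sum_comm]
  refine Finset.sum_congr rfl fun T hT => ?_
  rw [Finset.mem_powerset] at hT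
  have hmul := prod_mul_prod_sdiff F hH hT
  have hS : primeSet F H \ T ⊆ primeSet F H := Finset.sdiff_subset
  have key := sum_residues_multiples p F (monic_prod F h0 hS) (monic_prod F h0 hT) G
  rw [hmul] at key
  simp only [Finset.prod_const_one, mul_one, Finset.prod_boole, Finset.prod_ite_zero, mul_assoc,
    ← prod_primePart_dvd_iff F h0 hT, ← prod_primePart_dvd_iff F h0 hS]
  rw [← Finset.mul_sum]
  congr 1
  simp only [ite_mul, one_mul, zero_mul]
  rw [← Finset.sum_filter, key, anorm_prod F fun P hP => monic_primePart F h0 (hS hP)]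
  push_cast
  rfl

open scoped Classical in
theorem one_add_norm (G K : F[X]) :
    1 + ‖(if K ∣ G then (anorm F K : ℂ) else 0) - 1‖ = if K ∣ G then (anorm F K : ℝ) else 2 := by
  split_ifs
  · have h : (1 : ℝ) ≤ anorm F K := by exact_mod_cast one_le_anorm F K
    rw [show ((anorm F K : ℂ) - 1) = ((anorm F K - 1 : ℝ) : ℂ) by push_cast; rfl,
      Complex.norm_real, Real.norm_of_nonneg (by linarith)]
    ring
  · norm_num

open scoped Classical in
/-- The Euler product of the sum: `∏ (1 + x_P)` expands over the subsets of the primes of `H`,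
which parametrise the monic unitary divisors. -/
theorem sum_norm_etaStar {H : F[X]} (hH : H.Monic) (G : F[X]) :
    (∑' D : {D : F[X] // D.Monic ∧ D ∣ H ∧ IsCoprime D (H / D)}, ‖etaStar p F G D.1‖) =
      ∏ P ∈ primeSet F H,
        if primePart F H P ∣ G then (anorm F (primePart F H P) : ℝ) else 2 := by
  have h0 := hH.ne_zero
  rw [tsum_subtype_eq ((primeSet F H).powerset.image fun T => ∏ P ∈ T, primePart F H P)
    (fun D => by rw [← unitary_iff F hH]; simp) (fun D => ‖etaStar p F G D‖)]
  rw [Finset.sum_image]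
  · simp only [← one_add_norm]
    rw [Finset.prod_one_add]
    refine Finset.sum_congr rfl fun T hT => ?_
    rw [Finset.mem_powerset] at hT
    rw [etaStar_eq_prod p F (monic_prod F h0 hT), norm_prod, primeSet_prod F h0 hT]
    refine Finset.prod_congr rfl fun P hP => ?_
    rw [primePart_prod F hH hT hP]
  · intro T hT S hS h
    have hT' := primeSet_prod F h0 (Finset.mem_powerset.1 hT)
    have hS' := primeSet_prod F h0 (Finset.mem_powerset.1 hS)
    rw [← hT', ← hS']
    exact congrArg _ h

theorem omega_eq (H : F[X]) : omega F H = (primeSet F H).card := rfl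

/-- For nonzero `G` and nonzero monic `H`, the sum of `|η*(G,D)|` over the monic unitary
divisors `D` of `H` equals `2^(ω(H/(G,H)_*)) · |(G,H)_*|`; in particular it is at most
`2^(ω(H)) · |G|`. -/
theorem sum_abs_etaStar_unitary_divisors (G H : Polynomial F) (hG : G ≠ 0)
    (hH : H.Monic) (hH0 : H ≠ 0) :
    (∑' D : {D : Polynomial F // D.Monic ∧ D ∣ H ∧ IsCoprime D (H / D)},
        ‖etaStar p F G D.1‖) =
      (2 : ℝ) ^ omega F (H / ugcd F G H) * (anorm F (ugcd F G H) : ℝ) ∧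
    (∑' D : {D : Polynomial F // D.Monic ∧ D ∣ H ∧ IsCoprime D (H / D)},
        ‖etaStar p F G D.1‖) ≤
      (2 : ℝ) ^ omega F H * (anorm F G : ℝ) := by
  classical
  have hs : (primeSet F H).filter (primePart F H · ∣ G) ⊆ primeSet F H := Finset.filter_subset _ _
  have hu : ugcd F G H ∣ G := by
    rw [ugcd_eq, prod_primePart_dvd_iff F hH0 hs]
    exact fun P hP => (Finset.mem_filter.1 hP).2
  have hdiv : omega F (H / ugcd F G H) =
      (primeSet F H \ (primeSet F H).filter (primePart F H · ∣ G)).card := by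
    rw [ugcd_eq, div_prod F hH hs, omega_eq, primeSet_prod F hH0 Finset.sdiff_subset]
  have hmain : (∑' D : {D : Polynomial F // D.Monic ∧ D ∣ H ∧ IsCoprime D (H / D)},
      ‖etaStar p F G D.1‖) =
      (2 : ℝ) ^ omega F (H / ugcd F G H) * (anorm F (ugcd F G H) : ℝ) := by
    rw [sum_norm_etaStar p F hH, hdiv, ugcd_eq,
      anorm_prod F fun P hP => monic_primePart F hH0 (hs hP), Finset.prod_ite, Finset.prod_const,
      ← Finset.filter_not, Nat.cast_prod, mul_comm]
  refine ⟨hmain, hmain.le.trans ?_⟩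
  have h1 : omega F (H / ugcd F G H) ≤ omega F H := by
    rw [hdiv, omega_eq]
    exact Finset.card_le_card Finset.sdiff_subset
  have h2 : anorm F (ugcd F G H) ≤ anorm F G :=
    Nat.pow_le_pow_right Fintype.card_pos (natDegree_le_of_dvd hu hG)
  gcongr
  norm_num
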